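/- Let n jobs be given, where job j has processing time p_j ∈ ℕ, weight w_j ∈ ℕ and due date d_j ∈ ℕ. For J ⊆ {1,…,n} and t ∈ ℕ, define OPT[J,t] ∈ ℕ as the minimum of ∑_{j∈J} w_j·max(0, C_j(π) − d_j) over all linear orderings π of J processed consecutively without idle time starting at time t. Then for every J ⊆ {1,…,n} of even cardinality and every t ∈ ℕ, OPT[J,t] = min over all X ⊆ J with |X| = |J|/2 of ( OPT[X, t] + OPT[J∖X, t + p(X)] ), where p(X) = ∑_{k∈X} p_k. -/

import Mathlib

/-- Total weighted tardiness of the jobs in the list, processed consecutively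
without idle time starting at time `t`, in the order given by the list
(`t + p j - d j` is the truncated subtraction on `ℕ`, i.e. `max 0 (C_j - d_j)`). -/
def tardCost {n : ℕ} (p w d : Fin n → ℕ) : ℕ → List (Fin n) → ℕ
  | _, [] => 0
  | t, j :: l => w j * ((t + p j) - d j) + tardCost p w d (t + p j) l

/-- `OPT p w d J t` : minimum total weighted tardiness over all orderings of `J`
processed consecutively without idle time starting at time `t`. -/
noncomputable def OPT {n : ℕ} (p w d : Fin n → ℕ) (J : Finset (Fin n)) (t : ℕ) : ℕ :=
  sInf { v : ℕ | ∃ l : List (Fin n), l.Nodup ∧ l.toFinset = J ∧ v = tardCost p w d t l }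

/-! In an ordering of `J`, the jobs after the first `m` start at a time that depends only on the set
`X` of the first `m` jobs, namely `t + ∑ k ∈ X, p k`. So, once `X` is fixed, the two blocks can be
ordered optimally and independently of each other: concatenating optimal orderings of `X` and
`J \ X` gives an ordering of `J`, and cutting an optimal ordering of `J` after its `m`-th job gives
orderings of some such `X` and `J \ X`. -/

section

variable {n : ℕ} (p w d : Fin n → ℕ)

theorem tardCost_append (t : ℕ) (l₁ l₂ : List (Fin n)) :
    tardCost p w d t (l₁ ++ l₂) =
      tardCost p w d t l₁ + tardCost p w d (t + (l₁.map p).sum) l₂ := by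
  induction l₁ generalizing t with
  | nil => simp [tardCost]
  | cons j l ih => simp [tardCost, ih, add_assoc]

theorem OPT_toFinset_le_tardCost (t : ℕ) {l : List (Fin n)} (hl : l.Nodup) :
    OPT p w d l.toFinset t ≤ tardCost p w d t l :=
  Nat.sInf_le ⟨l, hl, rfl, rfl⟩

theorem exists_OPT_eq_tardCost (J : Finset (Fin n)) (t : ℕ) :
    ∃ l : List (Fin n), l.Nodup ∧ l.toFinset = J ∧ OPT p w d J t = tardCost p w d t l :=
  Nat.sInf_mem (s := {v | ∃ l : List (Fin n), l.Nodup ∧ l.toFinset = J ∧ v = tardCost p w d t l})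
    ⟨_, J.toList, J.nodup_toList, J.toList_toFinset, rfl⟩

theorem OPT_union_le {X Y : Finset (Fin n)} (hXY : Disjoint X Y) (t : ℕ) :
    OPT p w d (X ∪ Y) t ≤ OPT p w d X t + OPT p w d Y (t + ∑ k ∈ X, p k) := by
  obtain ⟨l₁, hl₁, rfl, hopt₁⟩ := exists_OPT_eq_tardCost p w d X t
  obtain ⟨l₂, hl₂, rfl, hopt₂⟩ := exists_OPT_eq_tardCost p w d Y (t + ∑ k ∈ l₁.toFinset, p k)
  have hnodup : (l₁ ++ l₂).Nodup := hl₁.append hl₂ (List.disjoint_toFinset_iff_disjoint.mp hXY)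
  calc OPT p w d (l₁.toFinset ∪ l₂.toFinset) t
      = OPT p w d (l₁ ++ l₂).toFinset t := by rw [List.toFinset_append]
    _ ≤ tardCost p w d t (l₁ ++ l₂) := OPT_toFinset_le_tardCost p w d t hnodup
    _ = OPT p w d l₁.toFinset t + OPT p w d l₂.toFinset (t + ∑ k ∈ l₁.toFinset, p k) := by
      rw [tardCost_append, hopt₁, hopt₂, List.sum_toFinset p hl₁]

theorem OPT_add_OPT_le_tardCost_append (t : ℕ) {l₁ l₂ : List (Fin n)} (hl₁ : l₁.Nodup)
    (hl₂ : l₂.Nodup) :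
    OPT p w d l₁.toFinset t + OPT p w d l₂.toFinset (t + ∑ k ∈ l₁.toFinset, p k) ≤
      tardCost p w d t (l₁ ++ l₂) := by
  rw [tardCost_append, List.sum_toFinset p hl₁]
  exact add_le_add (OPT_toFinset_le_tardCost p w d t hl₁) (OPT_toFinset_le_tardCost p w d _ hl₂)

theorem OPT_le_OPT_add_OPT_sdiff {J X : Finset (Fin n)} (hX : X ⊆ J) (t : ℕ) :
    OPT p w d J t ≤ OPT p w d X t + OPT p w d (J \ X) (t + ∑ k ∈ X, p k) := by
  simpa only [Finset.union_sdiff_of_subset hX] using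
    OPT_union_le p w d (Finset.disjoint_sdiff (s := X) (t := J)) t

theorem exists_OPT_add_OPT_sdiff_le (J : Finset (Fin n)) (t : ℕ) {m : ℕ} (hm : m ≤ J.card) :
    ∃ X ⊆ J, X.card = m ∧
      OPT p w d X t + OPT p w d (J \ X) (t + ∑ k ∈ X, p k) ≤ OPT p w d J t := by
  obtain ⟨l, hl, rfl, hopt⟩ := exists_OPT_eq_tardCost p w d J t
  rw [List.toFinset_card_of_nodup hl] at hm
  obtain ⟨l₁, l₂, rfl, rfl⟩ : ∃ l₁ l₂, l = l₁ ++ l₂ ∧ l₁.length = m :=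
    ⟨l.take m, l.drop m, (List.take_append_drop m l).symm, List.length_take_of_le hm⟩
  obtain ⟨hl₁, hl₂, hdisj⟩ := List.nodup_append'.mp hl
  have hsdiff : (l₁ ++ l₂).toFinset \ l₁.toFinset = l₂.toFinset := by
    rw [List.toFinset_append, Finset.union_sdiff_cancel_left
      (List.disjoint_toFinset_iff_disjoint.mpr hdisj)]
  refine ⟨l₁.toFinset, ?_, List.toFinset_card_of_nodup hl₁, ?_⟩
  · rw [List.toFinset_append]
    exact Finset.subset_union_left
  · rw [hopt, hsdiff]
    exact OPT_add_OPT_le_tardCost_append p w d t hl₁ hl₂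

theorem stmt3_general (J : Finset (Fin n)) (t : ℕ) {m : ℕ} (hm : m ≤ J.card) :
    IsLeast {v : ℕ | ∃ X ⊆ J, X.card = m ∧
      v = OPT p w d X t + OPT p w d (J \ X) (t + ∑ k ∈ X, p k)} (OPT p w d J t) := by
  constructor
  · obtain ⟨X, hX, hcard, hle⟩ := exists_OPT_add_OPT_sdiff_le p w d J t hm
    exact ⟨X, hX, hcard, (OPT_le_OPT_add_OPT_sdiff p w d hX t).antisymm hle⟩
  · rintro _ ⟨X, hX, -, rfl⟩
    exact OPT_le_OPT_add_OPT_sdiff p w d hX t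

end

theorem stmt3 {n : ℕ} (p w d : Fin n → ℕ) (J : Finset (Fin n)) (hJ : Even J.card) (t : ℕ) :
    OPT p w d J t =
      sInf { v : ℕ | ∃ X ⊆ J, X.card = J.card / 2 ∧
        v = OPT p w d X t + OPT p w d (J \ X) (t + ∑ k ∈ X, p k) } :=
  (stmt3_general p w d J t (Nat.div_le_self J.card 2)).csInf_eq.symm
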